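/- (Trading an information qubit for an ebit.) Let n, k, c, d be integers with n ≥ 1 and k ≥ 1, and suppose S ⊆ V_n is an F₂-subspace with dim S = n−k+c, dim(S ∩ S^⊥) = n−k−c, and every element of S^⊥ \ (S ∩ S^⊥) has Pauli weight at least d. Then there exists an F₂-subspace S' ⊆ V_n with dim S' = n−(k−1)+(c+1), dim(S' ∩ S'^⊥) = n−(k−1)−(c+1), and every element of S'^⊥ \ (S' ∩ S'^⊥) has Pauli weight at least d. That is, the existence of an [[n,k,d;c]] EAQEC code implies the existence of an [[n,k−1,d';c+1]] EAQEC code with d' ≥ d. -/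

import Mathlib

open Finset

/-- The binary symplectic space modelling `n`-qubit Pauli operators modulo phases. -/
abbrev V (n : ℕ) := (Fin n → ZMod 2) × (Fin n → ZMod 2)

/-- The Pauli weight of `v = (x, z)`: the number of indices where `(x i, z i) ≠ (0,0)`. -/
def wt {n : ℕ} (v : V n) : ℕ :=
  (Finset.univ.filter fun i => ¬(v.1 i = 0 ∧ v.2 i = 0)).card

/-- The binary symplectic product. -/
def sympl {n : ℕ} (u v : V n) : ZMod 2 :=
  ∑ i, (u.1 i * v.2 i + u.2 i * v.1 i)

lemma sympl_add_left {n : ℕ} (a b w : V n) :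
    sympl (a + b) w = sympl a w + sympl b w := by
  simp only [sympl, Prod.fst_add, Prod.snd_add, Pi.add_apply, ← Finset.sum_add_distrib]
  exact Finset.sum_congr rfl fun i _ => by ring

lemma sympl_smul_left {n : ℕ} (c : ZMod 2) (a w : V n) :
    sympl (c • a) w = c * sympl a w := by
  simp only [sympl, Prod.smul_fst, Prod.smul_snd, Pi.smul_apply, smul_eq_mul,
    Finset.mul_sum]
  exact Finset.sum_congr rfl fun i _ => by ring

/-- The symplectic dual `W^⊥` of a subspace `W ⊆ V n`. -/
def sdual {n : ℕ} (W : Submodule (ZMod 2) (V n)) : Submodule (ZMod 2) (V n) where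
  carrier := {u | ∀ w ∈ W, sympl u w = 0}
  add_mem' := fun ha hb w hw => by
    rw [sympl_add_left, ha w hw, hb w hw, add_zero]
  zero_mem' := fun w hw => by simp [sympl]
  smul_mem' := fun c a ha w hw => by rw [sympl_smul_left, ha w hw, mul_zero]

open scoped Classical

lemma sympl_comm {n : ℕ} (a b : V n) : sympl a b = sympl b a := by
  simp only [sympl]
  exact Finset.sum_congr rfl fun i _ => by ring

lemma sympl_self {n : ℕ} (a : V n) : sympl a a = 0 := by
  simp only [sympl]
  refine Finset.sum_eq_zero fun i _ => ?_
  rw [mul_comm (a.2 i)]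
  exact CharTwo.add_self_eq_zero _

/-- The symplectic product as a bilinear form. -/
def symplB (n : ℕ) : LinearMap.BilinForm (ZMod 2) (V n) :=
  LinearMap.mk₂ (ZMod 2) sympl sympl_add_left
    (fun c a w => by rw [sympl_smul_left, smul_eq_mul])
    (fun a b w => by rw [sympl_comm, sympl_add_left, sympl_comm b, sympl_comm w])
    (fun c a w => by rw [sympl_comm, sympl_smul_left, sympl_comm w, smul_eq_mul])

lemma symplB_apply {n : ℕ} (a b : V n) : symplB n a b = sympl a b := rfl

lemma symplB_isRefl (n : ℕ) : (symplB n).IsRefl := fun a b h => by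
  rw [symplB_apply] at *
  rw [sympl_comm, h]

lemma sympl_left_eq_zero {n : ℕ} (a : V n) (h : ∀ b, sympl a b = 0) : a = 0 := by
  refine Prod.ext (funext fun i => ?_) (funext fun i => ?_)
  · have := h (0, Pi.single i 1)
    simpa [sympl, Pi.single_apply] using this
  · have := h (Pi.single i 1, 0)
    simpa [sympl, Pi.single_apply] using this

lemma symplB_nondegenerate (n : ℕ) : (symplB n).Nondegenerate := by
  refine ⟨fun a h => sympl_left_eq_zero a h, fun a h => sympl_left_eq_zero a fun b => ?_⟩
  rw [sympl_comm]
  exact h b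

lemma sdual_eq_orthogonal {n : ℕ} (W : Submodule (ZMod 2) (V n)) :
    sdual W = (symplB n).orthogonal W := by
  ext u
  exact forall₂_congr fun w _ => by rw [symplB_apply, sympl_comm]

lemma sdual_sdual {n : ℕ} (W : Submodule (ZMod 2) (V n)) : sdual (sdual W) = W := by
  rw [sdual_eq_orthogonal, sdual_eq_orthogonal,
    LinearMap.BilinForm.orthogonal_orthogonal (symplB_nondegenerate n) (symplB_isRefl n)]

lemma finrank_sdual {n : ℕ} (W : Submodule (ZMod 2) (V n)) :
    Module.finrank (ZMod 2) W + Module.finrank (ZMod 2) (sdual W) = n + n := by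
  have h := LinearMap.BilinForm.finrank_orthogonal (symplB_nondegenerate n) W
  have h2 := Submodule.finrank_le W
  have h3 : Module.finrank (ZMod 2) (V n) = n + n := by simp
  rw [sdual_eq_orthogonal]
  omega

/-- Trading an information qubit for an ebit: an `[[n,k,d;c]]` EAQEC
code with `k ≥ 1` yields an `[[n,k−1,d';c+1]]` EAQEC code with `d' ≥ d`. -/
theorem EAQEC_trade_info_for_ebit (n k c d : ℕ) (hn : 1 ≤ n) (hk : 1 ≤ k)
    (S : Submodule (ZMod 2) (V n))
    (hdim : Module.finrank (ZMod 2) S + k = n + c)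
    (hrad : Module.finrank (ZMod 2) (S ⊓ sdual S : Submodule (ZMod 2) (V n)) + k + c = n)
    (hdist : ∀ v ∈ sdual S, v ∉ (S ⊓ sdual S : Submodule (ZMod 2) (V n)) → d ≤ wt v) :
    ∃ S' : Submodule (ZMod 2) (V n),
      Module.finrank (ZMod 2) S' + (k - 1) = n + (c + 1) ∧
      Module.finrank (ZMod 2) (S' ⊓ sdual S' : Submodule (ZMod 2) (V n)) + (k - 1) + (c + 1)
        = n ∧
      ∀ v ∈ sdual S', v ∉ (S' ⊓ sdual S' : Submodule (ZMod 2) (V n)) → d ≤ wt v := by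
  have hxy : ∃ x ∈ sdual S, ∃ y ∈ sdual S, sympl x y = 1 := by
    by_contra hcon
    have hle : sdual S ≤ S := by
      intro x hx
      rw [← sdual_sdual S]
      intro y hy
      by_contra h0
      refine hcon ⟨x, hx, y, hy, ?_⟩
      generalize sympl x y = t at h0
      revert t
      decide
    rw [inf_eq_right.mpr hle] at hrad
    have := finrank_sdual S
    omega
  obtain ⟨x, hx, y, hy, hxy⟩ := hxy
  have hyx : sympl y x = 1 := by rw [sympl_comm, hxy]
  have key : ∀ s ∈ S, ∀ a b : ZMod 2, sympl (s + (a • x + b • y)) x = b ∧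
      sympl (s + (a • x + b • y)) y = a := by
    intro s hs a b
    simp only [sympl_add_left, sympl_smul_left, sympl_self, hxy, hyx]
    rw [sympl_comm s, sympl_comm s, hx s hs, hy s hs]
    simp
  have hSle : sdual (S ⊔ Submodule.span (ZMod 2) {x, y}) ≤ sdual S :=
    fun v hv w hw => hv w (Submodule.mem_sup_left hw)
  have hxm : x ∈ S ⊔ Submodule.span (ZMod 2) {x, y} :=
    Submodule.mem_sup_right (Submodule.subset_span (by simp))
  have hym : y ∈ S ⊔ Submodule.span (ZMod 2) {x, y} :=
    Submodule.mem_sup_right (Submodule.subset_span (by simp))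
  have hradeq : (S ⊔ Submodule.span (ZMod 2) {x, y}) ⊓
      sdual (S ⊔ Submodule.span (ZMod 2) {x, y}) = S ⊓ sdual S := by
    apply le_antisymm
    · rintro v ⟨hv1, hv2⟩
      refine ⟨?_, hSle hv2⟩
      obtain ⟨s, hs, t, ht, rfl⟩ := Submodule.mem_sup.mp hv1
      obtain ⟨a, b, rfl⟩ := Submodule.mem_span_pair.mp ht
      obtain ⟨h1, h2⟩ := key s hs a b
      rw [hv2 x hxm] at h1
      rw [hv2 y hym] at h2
      simpa [← h1, ← h2] using hs
    · rintro v ⟨hv1, hv2⟩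
      refine ⟨Submodule.mem_sup_left hv1, fun w hw => ?_⟩
      obtain ⟨s, hs, t, ht, rfl⟩ := Submodule.mem_sup.mp hw
      obtain ⟨a, b, rfl⟩ := Submodule.mem_span_pair.mp ht
      rw [sympl_comm]
      simp only [sympl_add_left, sympl_smul_left]
      rw [sympl_comm s, hv2 s hs, hx v hv1, hy v hv1]
      simp
  have hspan : Module.finrank (ZMod 2) (Submodule.span (ZMod 2) {x, y}) = 2 := by
    have hli : LinearIndependent (ZMod 2) ![x, y] := by
      rw [LinearIndependent.pair_iff]
      intro a b hab
      obtain ⟨h1, h2⟩ := key 0 S.zero_mem a b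
      rw [hab] at h1 h2
      simp [sympl] at h1 h2
      exact ⟨h2.symm, h1.symm⟩
    have h := finrank_span_eq_card hli
    have hr : Set.range ![x, y] = {x, y} := by
      rw [Matrix.range_cons_cons_empty]
    rw [hr] at h
    simpa using h
  have hdisj : S ⊓ Submodule.span (ZMod 2) {x, y} = ⊥ := by
    rw [eq_bot_iff]
    rintro v ⟨hv1, hv2⟩
    obtain ⟨a, b, rfl⟩ := Submodule.mem_span_pair.mp hv2
    obtain ⟨h1, h2⟩ := key 0 S.zero_mem a b
    rw [zero_add, sympl_comm] at h1 h2
    rw [hx _ hv1] at h1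
    rw [hy _ hv1] at h2
    simp [← h1, ← h2]
  have hsum := Submodule.finrank_sup_add_finrank_inf_eq S (Submodule.span (ZMod 2) {x, y})
  rw [hdisj, hspan, finrank_bot] at hsum
  refine ⟨S ⊔ Submodule.span (ZMod 2) {x, y}, by omega, ?_, ?_⟩
  · rw [hradeq]
    omega
  · intro v hv hv'
    rw [hradeq] at hv'
    exact hdist v (hSle hv) hv'
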